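/- Let {G, (Γ0, Γ1), (Γ̃0, Γ̃1)} be a generalized boundary triple for the adjoint pair {S, S̃} with core {T, T̃} of {S*, S̃*}, assume ρ(A0) ≠ ∅, and let γ and M be the associated γ-field and Weyl function. Let B be a closable linear operator in G such that {Γ1 f : f ∈ dom T, Γ0 f = 0} ⊆ dom B, and suppose that for some λ0 ∈ ρ(A0) one has 1 ∈ ρ(B M(λ0)), i.e., the operator h ↦ h − B M(λ0)h with domain {h ∈ G : M(λ0)h ∈ dom B} is injective, has range equal to G, and has bounded inverse. Then A_B is a closed operator in H, λ0 ∈ ρ(A_B), and the Krein-type resolvent formula holds: for every λ ∈ ρ(A0) ∩ ρ(A_B) and every f ∈ H one has Γ1 (A0 − λ)^{-1} f ∈ dom B, there exists a unique h ∈ G with M(λ)h ∈ dom B and h − B M(λ)h = B Γ1 (A0 − λ)^{-1} f, and (A_B − λ)^{-1} f = (A0 − λ)^{-1} f + γ(λ)h. -/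

import Mathlib

/-!
Relative to one solution `u ∈ ker Γ0` of `(T - λ) u = f`, every solution in `dom T` is `u + γ(λ) h`
with `h` its value under `Γ0`, and the boundary condition `B Γ1 x = Γ0 x` for `x = u + γ(λ) h` reads
`h - B M(λ) h = B Γ1 u`. Solving this equation for `h` gives Krein's formula, and at `λ0` it shows
that `A_B - λ0` is a bijection with inverse
`(A0 - λ0)⁻¹ + γ(λ0) (1 - B M(λ0))⁻¹ B Γ1 (A0 - λ0)⁻¹`.

All three factors are bounded by the closed graph theorem, because Green's identity describes their
graphs by closed conditions: tested against all of `dom T̃` it determines `Γ1 f`, as `Γ̃0` is onto;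
tested against `ker Γ̃0` it determines `γ(λ) h`, as `A0` is the adjoint of `Ã0`; and closability of
`B` transfers boundedness from `Γ1 (A0 - λ)⁻¹` to `B Γ1 (A0 - λ)⁻¹`.
-/

open scoped ComplexInnerProductSpace

noncomputable section

/-- The inner product in the convention of the paper: linear in the *first* argument and
conjugate-linear in the second (the opposite of Mathlib's convention). -/
def pinner {E : Type*} [NormedAddCommGroup E] [InnerProductSpace ℂ E] (x y : E) : ℂ :=
  ⟪y, x⟫

variable {H G : Type*}
  [NormedAddCommGroup H] [InnerProductSpace ℂ H] [CompleteSpace H]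
  [NormedAddCommGroup G] [InnerProductSpace ℂ G] [CompleteSpace G]

/-- The restriction of a partially defined linear operator `T` in `H` to a submodule `p` of its
domain, viewed again as a partially defined linear operator in `H`. -/
def LinearPMap.restrictTo (T : H →ₗ.[ℂ] H) (p : Submodule ℂ T.domain) : H →ₗ.[ℂ] H where
  domain := p.map T.domain.subtype
  toFun := T.toFun ∘ₗ p.subtype ∘ₗ
    (Submodule.equivMapOfInjective T.domain.subtype (Submodule.injective_subtype _)
      p).symm.toLinearMap

/-- `R` is the (everywhere defined, bounded) resolvent of the operator `A` at the point `lam`,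
i.e. `R` is a two-sided inverse of `A - lam`. -/
def ResolventAt (A : H →ₗ.[ℂ] H) (lam : ℂ) (R : H →L[ℂ] H) : Prop :=
  (∀ x : A.domain, R (A x - lam • (x : H)) = (x : H)) ∧
  (∀ h : H, ∃ x : A.domain, (x : H) = R h ∧ A x - lam • (x : H) = h)

/-- `lam` belongs to the resolvent set of `A`: `A - lam` is a bijection of `dom A` onto `H`
with a bounded everywhere defined inverse. -/
def InResolventSet (A : H →ₗ.[ℂ] H) (lam : ℂ) : Prop :=
  ∃ R : H →L[ℂ] H, ResolventAt A lam R

/-- `{G, (Γ0, Γ1), (Γt0, Γt1)}` is a generalized boundary triple for the adjoint pair `{S, St}`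
with core `{T, Tt}` of `{S*, St*}`. -/
structure IsGeneralizedBoundaryTriple (S St T Tt : H →ₗ.[ℂ] H)
    (Γ0 Γ1 : T.domain →ₗ[ℂ] G) (Γt0 Γt1 : Tt.domain →ₗ[ℂ] G) : Prop where
  dense_S : Dense (S.domain : Set H)
  dense_St : Dense (St.domain : Set H)
  closed_S : S.IsClosed
  closed_St : St.IsClosed
  adjoint_pair : ∀ (f : S.domain) (g : St.domain),
    pinner (S f) (g : H) = pinner (f : H) (St g)
  T_le : T ≤ S.adjoint
  Tt_le : Tt ≤ St.adjoint
  T_adjoint : T.adjoint = S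
  Tt_adjoint : Tt.adjoint = St
  green : ∀ (f : T.domain) (g : Tt.domain),
    pinner (T f) (g : H) - pinner (f : H) (Tt g)
      = pinner (Γ1 f) (Γt0 g) - pinner (Γ0 f) (Γt1 g)
  surj_Γ0 : Function.Surjective Γ0
  surj_Γt0 : Function.Surjective Γt0
  A0_adjoint : (T.restrictTo (LinearMap.ker Γ0)).adjoint = Tt.restrictTo (LinearMap.ker Γt0)
  At0_adjoint : (Tt.restrictTo (LinearMap.ker Γt0)).adjoint = T.restrictTo (LinearMap.ker Γ0)

section BoundaryCondition

variable {𝕜 E F : Type*} [CommRing 𝕜] [AddCommGroup E] [Module 𝕜 E] [AddCommGroup F] [Module 𝕜 F]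
  {T : E →ₗ.[𝕜] E} {Γ0 Γ1 : T.domain →ₗ[𝕜] F} {B : F →ₗ.[𝕜] F} {lam : 𝕜} {gam : F → T.domain}

/-- `gam` is the value `γ(lam)` of the `γ`-field: a right inverse of `Γ0` with values in
`ker (T - lam)`. Linearity is not part of the definition; see `IsGammaField.exists_linearMap`. -/
def IsGammaField (T : E →ₗ.[𝕜] E) (Γ0 : T.domain →ₗ[𝕜] F) (lam : 𝕜) (gam : F → T.domain) : Prop :=
  ∀ h : F, T (gam h) = lam • (gam h : E) ∧ Γ0 (gam h) = h

theorem IsGammaField.map_add_sub_smul (hgam : IsGammaField T Γ0 lam gam) (u : T.domain) (h : F) :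
    T (u + gam h) - lam • ((u + gam h : T.domain) : E) = T u - lam • (u : E) := by
  rw [LinearPMap.map_add, (hgam h).1, Submodule.coe_add, smul_add, add_sub_add_right_eq_sub]

theorem IsGammaField.eq_add (hgam : IsGammaField T Γ0 lam gam)
    (hker : ∀ x, Γ0 x = 0 → T x = lam • (x : E) → x = 0) {x u : T.domain} (hu : Γ0 u = 0)
    (hxu : T x - lam • (x : E) = T u - lam • (u : E)) : x = u + gam (Γ0 x) := by
  refine sub_eq_zero.1 (hker _ ?_ ?_)
  · rw [map_sub, map_add, hu, (hgam _).2, zero_add, sub_self]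
  · rw [← sub_eq_zero, LinearPMap.map_sub, Submodule.coe_sub, smul_sub, sub_sub_sub_comm,
      hgam.map_add_sub_smul, hxu, sub_self]

theorem IsGammaField.existsUnique_eq_add (hgam : IsGammaField T Γ0 lam gam)
    (hker : ∀ x, Γ0 x = 0 → T x = lam • (x : E) → x = 0) {x u : T.domain} (hu : Γ0 u = 0)
    (hxu : T x - lam • (x : E) = T u - lam • (u : E)) : ∃! h, x = u + gam h := by
  refine ⟨Γ0 x, hgam.eq_add hker hu hxu, ?_⟩
  rintro h rfl
  rw [map_add, hu, (hgam h).2, zero_add]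

theorem IsGammaField.exists_linearMap (hgam : IsGammaField T Γ0 lam gam)
    (hker : ∀ x, Γ0 x = 0 → T x = lam • (x : E) → x = 0) :
    ∃ γ : F →ₗ[𝕜] T.domain, ⇑γ = gam := by
  have eq_gam : ∀ {x : T.domain} {h : F}, Γ0 x = h → T x = lam • (x : E) → gam h = x := by
    rintro x _ rfl hx
    simpa using (hgam.eq_add hker (map_zero Γ0) (x := x) (by simp [hx])).symm
  exact ⟨
    { toFun := gam
      map_add' a b := eq_gam (by rw [map_add, (hgam a).2, (hgam b).2])
        (by rw [LinearPMap.map_add, (hgam a).1, (hgam b).1, Submodule.coe_add, smul_add])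
      map_smul' c a := eq_gam (by rw [map_smul, (hgam a).2, RingHom.id_apply])
        (by rw [LinearPMap.map_smul, (hgam a).1, RingHom.id_apply, Submodule.coe_smul,
          smul_comm]) }, rfl⟩

theorem exists_sub_apply_eq_iff_mem_graph {y h k : F} :
    (∃ hy : y ∈ B.domain, h - B ⟨y, hy⟩ = k) ↔ (y, h - k) ∈ B.graph := by
  rw [LinearPMap.mem_graph_iff, Subtype.exists]
  constructor
  · rintro ⟨hy, rfl⟩
    exact ⟨y, hy, rfl, (sub_sub_cancel _ _).symm⟩
  · rintro ⟨_, hy, rfl, hBy⟩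
    exact ⟨hy, by rw [hBy, sub_sub_cancel]⟩

theorem IsGammaField.add_mem_comap_graph_iff (hgam : IsGammaField T Γ0 lam gam) {u : T.domain}
    (hu : Γ0 u = 0) {k : F} (hk : (Γ1 u, k) ∈ B.graph) {h : F} :
    u + gam h ∈ B.graph.comap (Γ1.prod Γ0) ↔ (Γ1 (gam h), h - k) ∈ B.graph := by
  have boundary_values : Γ1.prod Γ0 (u + gam h) = (Γ1 u, k) + (Γ1 (gam h), h - k) := by
    simp [hu, (hgam h).2]
  rw [Submodule.mem_comap, boundary_values, add_mem_cancel_left hk]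

end BoundaryCondition

section ClosedGraph

variable {𝕜 E F K : Type*}

theorem exists_continuousLinearMap_of_linearRelation [NormedField 𝕜] [NormedAddCommGroup E]
    [NormedSpace 𝕜 E] [NormedAddCommGroup F] [NormedSpace 𝕜 F] (r : Submodule 𝕜 (E × F)) {C : ℝ}
    (hdom : ∀ x, ∃ y, (x, y) ∈ r) (hbound : ∀ p ∈ r, ‖p.2‖ ≤ C * ‖p.1‖) :
    ∃ f : E →L[𝕜] F, ∀ x y, (x, y) ∈ r ↔ f x = y := by
  choose f hf using hdom
  have hunique : ∀ {x y}, (x, y) ∈ r → f x = y := fun {x y} hxy => by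
    simpa [sub_eq_zero] using hbound _ (r.sub_mem (hf x) hxy)
  let fₗ : E →ₗ[𝕜] F :=
    { toFun := f
      map_add' a b := hunique (r.add_mem (hf a) (hf b))
      map_smul' c a := hunique (r.smul_mem c (hf a)) }
  refine ⟨fₗ.mkContinuous C fun x => hbound _ (hf x), fun x y => ⟨hunique, ?_⟩⟩
  rintro rfl
  exact hf x

theorem exists_inverse_one_sub_comp [NormedField 𝕜] [NormedAddCommGroup F] [NormedSpace 𝕜 F]
    {B : F →ₗ.[𝕜] F} (M : F →ₗ[𝕜] F) {C : ℝ}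
    (hsurj : ∀ k, ∃ h, ∃ hm : M h ∈ B.domain, h - B ⟨M h, hm⟩ = k)
    (hbound : ∀ h (hm : M h ∈ B.domain), ‖h‖ ≤ C * ‖h - B ⟨M h, hm⟩‖) :
    ∃ N : F →L[𝕜] F, ∀ h k, (M h, h - k) ∈ B.graph ↔ N k = h := by
  let r : Submodule 𝕜 (F × F) := B.graph.comap
    ((M ∘ₗ LinearMap.snd 𝕜 F F).prod (LinearMap.snd 𝕜 F F - LinearMap.fst 𝕜 F F))
  have mem_r : ∀ {k h}, (k, h) ∈ r ↔ ∃ hm : M h ∈ B.domain, h - B ⟨M h, hm⟩ = k :=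
    exists_sub_apply_eq_iff_mem_graph.symm
  obtain ⟨N, hN⟩ := exists_continuousLinearMap_of_linearRelation r (C := C)
    (fun k => (hsurj k).imp fun h => mem_r.2) (by
      rintro ⟨k, h⟩ hkh
      obtain ⟨hm, rfl⟩ := mem_r.1 hkh
      exact hbound h hm)
  exact ⟨N, fun h k => hN k h⟩

theorem exists_continuousLinearMap_mem_graph_of_isClosable [NontriviallyNormedField 𝕜]
    [NormedAddCommGroup E] [NormedSpace 𝕜 E] [CompleteSpace E] [NormedAddCommGroup F]
    [NormedSpace 𝕜 F] [NormedAddCommGroup K] [NormedSpace 𝕜 K] [CompleteSpace K] {B : F →ₗ.[𝕜] K}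
    (hB : B.IsClosable) (L : E →L[𝕜] F) (hL : ∀ x, L x ∈ B.domain) :
    ∃ P : E →L[𝕜] K, ∀ x, (L x, P x) ∈ B.graph := by
  let P : E →ₗ[𝕜] K := B.toFun ∘ₗ L.toLinearMap.codRestrict B.domain hL
  have hP : ∀ x, (L x, P x) ∈ B.graph := fun x => B.mem_graph ⟨L x, hL x⟩
  obtain ⟨B', hB'⟩ := hB
  have graph_le : B.graph ≤ B'.graph := hB' ▸ B.graph.le_topologicalClosure
  have graph_eq : (P.graph : Set (E × K)) = {p | (L p.1, p.2) ∈ B'.graph} := by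
    ext ⟨x, y⟩
    refine ⟨?_, fun hxy => B'.mem_graph_snd_inj hxy (graph_le (hP x)) rfl⟩
    rintro (rfl : y = P x)
    exact graph_le (hP x)
  have closed : IsClosed (B'.graph : Set (F × K)) := hB' ▸ B.graph.isClosed_topologicalClosure
  refine ⟨⟨P, P.continuous_of_isClosed_graph ?_⟩, hP⟩
  rw [graph_eq]
  exact closed.preimage (by fun_prop)

end ClosedGraph

section MutualAdjoints

variable {𝕜 E F : Type*} [RCLike 𝕜] [NormedAddCommGroup E] [InnerProductSpace 𝕜 E]
  [CompleteSpace E] [NormedAddCommGroup F] [InnerProductSpace 𝕜 F] [CompleteSpace F]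
  {A : E →ₗ.[𝕜] F} {B : F →ₗ.[𝕜] E}

/- `LinearPMap.adjoint` is junk off the densely defined operators: if `dom B` is not dense, then
`A = B†` acts as zero, so that `B = A†` is everywhere defined after all. -/
theorem dense_domain_of_adjoint_eq (hA : A.adjoint = B) (hB : B.adjoint = A) :
    Dense (B.domain : Set F) := by
  by_contra hdense
  have A_eq_zero : ∀ x : A.domain, A x = 0 := by
    subst hB
    exact LinearPMap.adjoint_apply_of_not_dense hdense
  refine hdense fun y => subset_closure ?_
  rw [SetLike.mem_coe, ← hA]
  exact LinearPMap.mem_adjoint_domain_of_exists y ⟨0, fun x => by simp [A_eq_zero x]⟩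

theorem graph_eq_graph_adjoint_of_adjoint_eq (hA : A.adjoint = B) (hB : B.adjoint = A) :
    A.graph = B.graph.adjoint := by
  rw [← LinearPMap.adjoint_graph_eq_graph_adjoint (dense_domain_of_adjoint_eq hA hB), hB]

end MutualAdjoints

section Resolvent

omit [CompleteSpace H]

variable {A T : H →ₗ.[ℂ] H} {p : Submodule ℂ T.domain} {lam : ℂ} {R : H →L[ℂ] H}

theorem ResolventAt.mem_graph_iff (hR : ResolventAt A lam R) {x y : H} :
    (x, y) ∈ A.graph ↔ R (y - lam • x) = x := by
  rw [LinearPMap.mem_graph_iff]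
  constructor
  · rintro ⟨z, rfl, rfl⟩
    exact hR.1 z
  · intro hx
    obtain ⟨z, hzR, hzy⟩ := hR.2 (y - lam • x)
    obtain rfl : (z : H) = x := hzR.trans hx
    exact ⟨z, rfl, sub_left_injective hzy⟩

theorem ResolventAt.isClosed (hR : ResolventAt A lam R) : A.IsClosed := by
  have graph_eq : (A.graph : Set (H × H)) = {p | R (p.2 - lam • p.1) = p.1} :=
    Set.ext fun _ => hR.mem_graph_iff
  rw [LinearPMap.IsClosed, graph_eq]
  exact isClosed_eq (by fun_prop) (by fun_prop)

theorem restrictTo_apply_of_mem {z : T.domain} (hz : z ∈ p) :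
    T.restrictTo p ⟨z, Submodule.mem_map_of_mem hz⟩ = T z :=
  congrArg (fun w : p => T w) <| LinearEquiv.symm_apply_apply
    (Submodule.equivMapOfInjective T.domain.subtype (Submodule.injective_subtype _) p) ⟨z, hz⟩

theorem mem_restrictTo_graph_iff {x y : H} :
    (x, y) ∈ (T.restrictTo p).graph ↔ ∃ z ∈ p, (z : H) = x ∧ T z = y := by
  rw [LinearPMap.mem_graph_iff]
  constructor
  · rintro ⟨⟨_, z, hz, rfl⟩, rfl, rfl⟩
    exact ⟨z, hz, rfl, (restrictTo_apply_of_mem hz).symm⟩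
  · rintro ⟨z, hz, rfl, rfl⟩
    exact ⟨⟨z, Submodule.mem_map_of_mem hz⟩, rfl, restrictTo_apply_of_mem hz⟩

theorem resolventAt_restrictTo_iff :
    ResolventAt (T.restrictTo p) lam R ↔
      (∀ x ∈ p, R (T x - lam • (x : H)) = x) ∧
      ∀ f : H, ∃ x ∈ p, (x : H) = R f ∧ T x - lam • (x : H) = f := by
  have graph_form : ResolventAt (T.restrictTo p) lam R ↔
      (∀ x y, (x, y) ∈ (T.restrictTo p).graph → R (y - lam • x) = x) ∧
      ∀ f, ∃ x y, (x, y) ∈ (T.restrictTo p).graph ∧ x = R f ∧ y - lam • x = f := by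
    simp [ResolventAt, LinearPMap.mem_graph_iff]
  rw [graph_form]
  simp only [mem_restrictTo_graph_iff]
  aesop

theorem ResolventAt.exists_lift (hR : ResolventAt (T.restrictTo p) lam R) :
    ∃ L : H →ₗ[ℂ] T.domain, ∀ f, L f ∈ p ∧ (L f : H) = R f ∧ T (L f) - lam • (L f : H) = f := by
  have hR' := (resolventAt_restrictTo_iff.1 hR).2
  have hdom : ∀ f, R f ∈ T.domain := fun f => by
    obtain ⟨x, -, hxR, -⟩ := hR' f
    exact hxR ▸ x.2
  refine ⟨R.toLinearMap.codRestrict T.domain hdom, fun f => ?_⟩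
  obtain ⟨x, hx, hxR, hxf⟩ := hR' f
  obtain rfl : x = R.toLinearMap.codRestrict T.domain hdom f := Subtype.ext hxR
  exact ⟨hx, hxR, hxf⟩

theorem ResolventAt.eq_zero_of_mem (hR : ResolventAt (T.restrictTo p) lam R) {x : T.domain}
    (hx : x ∈ p) (hTx : T x = lam • (x : H)) : x = 0 := by
  have hRx := (resolventAt_restrictTo_iff.1 hR).1 x hx
  rw [hTx, sub_self, map_zero] at hRx
  exact Subtype.ext hRx.symm

end Resolvent

section Krein

omit [CompleteSpace H] [CompleteSpace G]

variable {T : H →ₗ.[ℂ] H} {Γ0 Γ1 : T.domain →ₗ[ℂ] G} {B : G →ₗ.[ℂ] G} {lam : ℂ} {gam : G → T.domain}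
  {R RB : H →L[ℂ] H}

theorem resolventAt_comap_graph_of_eq_add (hR : ResolventAt (T.restrictTo (LinearMap.ker Γ0)) lam R)
    (hgam : IsGammaField T Γ0 lam gam) {P : H → G}
    (hP : ∀ u, Γ0 u = 0 → (Γ1 u, P (T u - lam • (u : H))) ∈ B.graph) {N : G → G}
    (hN : ∀ h k, (Γ1 (gam h), h - k) ∈ B.graph ↔ N k = h)
    (hRB : ∀ f, RB f = R f + gam (N (P f))) :
    ResolventAt (T.restrictTo (B.graph.comap (Γ1.prod Γ0))) lam RB := by
  refine resolventAt_restrictTo_iff.2 ⟨fun x hx => ?_, fun f => ?_⟩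
  · obtain ⟨u, hu, huR, huf⟩ := (resolventAt_restrictTo_iff.1 hR).2 (T x - lam • (x : H))
    have x_eq : x = u + gam (Γ0 x) := hgam.eq_add (fun _ => hR.eq_zero_of_mem) hu huf.symm
    have N_eq : N (P (T x - lam • (x : H))) = Γ0 x := by
      rw [x_eq, hgam.add_mem_comap_graph_iff hu (hP u hu), hN, huf] at hx
      exact hx
    rw [hRB, N_eq, ← huR, ← Submodule.coe_add, ← x_eq]
  · obtain ⟨u, hu, huR, huf⟩ := (resolventAt_restrictTo_iff.1 hR).2 f
    refine ⟨u + gam (N (P f)), ?_, ?_, (hgam.map_add_sub_smul _ _).trans huf⟩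
    · exact (hgam.add_mem_comap_graph_iff hu (hP u hu)).2 ((hN _ _).2 (by rw [huf]))
    · rw [hRB, Submodule.coe_add, huR]

theorem IsGammaField.mem_graph_iff_resolvent_apply_eq (hgam : IsGammaField T Γ0 lam gam)
    (hRB : ResolventAt (T.restrictTo (B.graph.comap (Γ1.prod Γ0))) lam RB) {u : T.domain}
    (hu : Γ0 u = 0) {k : G} (hk : (Γ1 u, k) ∈ B.graph) {h : G} :
    (Γ1 (gam h), h - k) ∈ B.graph ↔ RB (T u - lam • (u : H)) = u + gam h := by
  rw [resolventAt_restrictTo_iff] at hRB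
  rw [← hgam.add_mem_comap_graph_iff hu hk]
  constructor
  · intro hmem
    rw [← hgam.map_add_sub_smul u h, hRB.1 _ hmem, Submodule.coe_add]
  · intro heq
    obtain ⟨x, hx, hxR, -⟩ := hRB.2 (T u - lam • (u : H))
    obtain rfl : x = u + gam h := Subtype.ext (hxR.trans heq)
    exact hx

theorem IsGammaField.existsUnique_resolvent_apply_eq (hgam : IsGammaField T Γ0 lam gam)
    (hker : ∀ x, Γ0 x = 0 → T x = lam • (x : H) → x = 0) {p : Submodule ℂ T.domain}
    (hRB : ResolventAt (T.restrictTo p) lam RB) {u : T.domain} (hu : Γ0 u = 0) :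
    ∃! h, RB (T u - lam • (u : H)) = u + gam h := by
  obtain ⟨x, -, hxR, hxu⟩ := (resolventAt_restrictTo_iff.1 hRB).2 (T u - lam • (u : H))
  simpa only [← hxR, ← Submodule.coe_add, SetLike.coe_eq_coe]
    using hgam.existsUnique_eq_add hker hu hxu

end Krein

section Green

omit [CompleteSpace H] [CompleteSpace G]

variable {T Tt : H →ₗ.[ℂ] H} {Γ0 Γ1 : T.domain →ₗ[ℂ] G} {Γt0 Γt1 : Tt.domain →ₗ[ℂ] G} {lam : ℂ}

/-- The abstract Green identity for `T`, `T̃` and their boundary maps, without reference to an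
adjoint pair `{S, S̃}`. -/
def GreenIdentity (T Tt : H →ₗ.[ℂ] H) (Γ0 Γ1 : T.domain →ₗ[ℂ] G) (Γt0 Γt1 : Tt.domain →ₗ[ℂ] G) :
    Prop :=
  ∀ (f : T.domain) (g : Tt.domain),
    pinner (T f) (g : H) - pinner (f : H) (Tt g)
      = pinner (Γ1 f) (Γt0 g) - pinner (Γ0 f) (Γt1 g)

theorem GreenIdentity.eq_Γ1_iff (hgreen : GreenIdentity T Tt Γ0 Γ1 Γt0 Γt1)
    (hΓt0 : Function.Surjective Γt0) {f : T.domain} {k : G} :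
    k = Γ1 f ↔ ∀ v, ⟪Γt0 v, k⟫ = ⟪(v : H), T f⟫ - ⟪Tt v, (f : H)⟫ + ⟪Γt1 v, Γ0 f⟫ := by
  have inner_Γ1 : ∀ v, ⟪Γt0 v, Γ1 f⟫ = ⟪(v : H), T f⟫ - ⟪Tt v, (f : H)⟫ + ⟪Γt1 v, Γ0 f⟫ :=
    fun v => (sub_eq_iff_eq_add.1 (hgreen f v).symm)
  simp only [← inner_Γ1]
  exact ⟨fun h v => by rw [h], fun h => ext_inner_left ℂ (hΓt0.forall.2 h)⟩

theorem GreenIdentity.continuous_Γ1_comp [CompleteSpace G]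
    (hgreen : GreenIdentity T Tt Γ0 Γ1 Γt0 Γt1)
    (hΓt0 : Function.Surjective Γt0) {E : Type*} [NormedAddCommGroup E] [NormedSpace ℂ E]
    [CompleteSpace E] (L : E →ₗ[ℂ] T.domain) (hL : Continuous fun x => (L x : H))
    (hTL : Continuous fun x => T (L x)) (hΓ0L : Continuous fun x => Γ0 (L x)) :
    Continuous (Γ1 ∘ₗ L) := by
  have graph_eq : ((Γ1 ∘ₗ L).graph : Set (E × G)) = {p | ∀ v, ⟪Γt0 v, p.2⟫
      = ⟪(v : H), T (L p.1)⟫ - ⟪Tt v, (L p.1 : H)⟫ + ⟪Γt1 v, Γ0 (L p.1)⟫} :=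
    Set.ext fun _ => hgreen.eq_Γ1_iff hΓt0
  refine LinearMap.continuous_of_isClosed_graph _ ?_
  rw [graph_eq, Set.ofPred_forall]
  have hL' := hL.comp (continuous_fst (X := E) (Y := G))
  have hTL' := hTL.comp (continuous_fst (X := E) (Y := G))
  have hΓ0L' := hΓ0L.comp (continuous_fst (X := E) (Y := G))
  exact isClosed_iInter fun v => isClosed_eq (by fun_prop) <|
    ((continuous_const.inner hTL').sub (continuous_const.inner hL')).add
      (continuous_const.inner hΓ0L')

theorem GreenIdentity.exists_continuousLinearMap_mem_graph [CompleteSpace H] [CompleteSpace G]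
    (hgreen : GreenIdentity T Tt Γ0 Γ1 Γt0 Γt1) (hΓt0 : Function.Surjective Γt0) {B : G →ₗ.[ℂ] G}
    (hB : B.IsClosable) (hran : ∀ f, Γ0 f = 0 → Γ1 f ∈ B.domain) {R : H →L[ℂ] H}
    (hR : ResolventAt (T.restrictTo (LinearMap.ker Γ0)) lam R) :
    ∃ P : H →L[ℂ] G, ∀ u, Γ0 u = 0 → (Γ1 u, P (T u - lam • (u : H))) ∈ B.graph := by
  obtain ⟨L, hL⟩ := hR.exists_lift
  have L_apply : ∀ f, (L f : H) = R f := fun f => (hL f).2.1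
  have T_L : ∀ f, T (L f) = f + lam • R f := fun f => by
    rw [← L_apply, ← sub_eq_iff_eq_add, (hL f).2.2]
  have Γ0_L : ∀ f, Γ0 (L f) = 0 := fun f => (hL f).1
  have hΓ1L : Continuous (Γ1 ∘ₗ L) := hgreen.continuous_Γ1_comp hΓt0 L
    (by simp only [L_apply]; fun_prop) (by simp only [T_L]; fun_prop)
    (by simp only [Γ0_L]; fun_prop)
  obtain ⟨P, hP⟩ := exists_continuousLinearMap_mem_graph_of_isClosable hB ⟨Γ1 ∘ₗ L, hΓ1L⟩
    fun f => hran (L f) (Γ0_L f)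
  refine ⟨P, fun u hu => ?_⟩
  have L_eq : L (T u - lam • (u : H)) = u :=
    Subtype.ext ((L_apply _).trans ((resolventAt_restrictTo_iff.1 hR).1 u hu))
  simpa [L_eq] using hP (T u - lam • (u : H))

theorem GreenIdentity.eq_gamma_iff [CompleteSpace H] (hgreen : GreenIdentity T Tt Γ0 Γ1 Γt0 Γt1)
    (hA0 : (T.restrictTo (LinearMap.ker Γ0)).adjoint = Tt.restrictTo (LinearMap.ker Γt0))
    (hAt0 : (Tt.restrictTo (LinearMap.ker Γt0)).adjoint = T.restrictTo (LinearMap.ker Γ0))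
    (hker : ∀ x, Γ0 x = 0 → T x = lam • (x : H) → x = 0) {gam : G → T.domain}
    (hgam : IsGammaField T Γ0 lam gam) {h : G} {x : H} :
    x = gam h ↔ ∀ v, Γt0 v = 0 → ⟪(v : H), lam • x⟫ - ⟪Tt v, x⟫ = -⟪Γt1 v, h⟫ := by
  have gam_weak : ∀ v, Γt0 v = 0 →
      ⟪(v : H), lam • (gam h : H)⟫ - ⟪Tt v, (gam h : H)⟫ = -⟪Γt1 v, h⟫ := fun v hv => by
    simpa [pinner, (hgam h).1, (hgam h).2, hv] using hgreen (gam h) v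
  have eq_iff_mem : x = gam h ↔
      (x - gam h, lam • (x - gam h)) ∈ (T.restrictTo (LinearMap.ker Γ0)).graph := by
    rw [mem_restrictTo_graph_iff]
    constructor
    · intro hx
      exact ⟨0, zero_mem _, by simp [hx], by simp [hx, LinearPMap.map_zero]⟩
    · rintro ⟨z, hz, hzx, hTz⟩
      rw [← sub_eq_zero, ← hzx, hker z hz (hTz.trans (by rw [hzx])), Submodule.coe_zero]
  rw [eq_iff_mem, graph_eq_graph_adjoint_of_adjoint_eq hA0 hAt0, Submodule.mem_adjoint_iff]
  simp only [mem_restrictTo_graph_iff, LinearMap.mem_ker, forall_exists_index, and_imp]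
  have iff_weak : ∀ v, Γt0 v = 0 →
      (⟪Tt v, x - gam h⟫ - ⟪(v : H), lam • (x - gam h)⟫ = 0 ↔
        ⟪(v : H), lam • x⟫ - ⟪Tt v, x⟫ = -⟪Γt1 v, h⟫) := fun v hv => by
    rw [← gam_weak v hv, smul_sub, inner_sub_right, inner_sub_right, ← sub_eq_zero (b := _ - _),
      ← neg_eq_zero]
    ring_nf
  refine ⟨fun hx v hv => (iff_weak v hv).1 (hx _ _ v hv rfl rfl), ?_⟩
  rintro hx _ _ v hv rfl rfl
  exact (iff_weak v hv).2 (hx v hv)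

theorem GreenIdentity.continuous_gamma [CompleteSpace H] [CompleteSpace G]
    (hgreen : GreenIdentity T Tt Γ0 Γ1 Γt0 Γt1)
    (hA0 : (T.restrictTo (LinearMap.ker Γ0)).adjoint = Tt.restrictTo (LinearMap.ker Γt0))
    (hAt0 : (Tt.restrictTo (LinearMap.ker Γt0)).adjoint = T.restrictTo (LinearMap.ker Γ0))
    (hker : ∀ x, Γ0 x = 0 → T x = lam • (x : H) → x = 0) {γ : G →ₗ[ℂ] T.domain}
    (hγ : IsGammaField T Γ0 lam γ) : Continuous (T.domain.subtype ∘ₗ γ) := by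
  have graph_eq : ((T.domain.subtype ∘ₗ γ).graph : Set (G × H)) =
      {p | ∀ v, Γt0 v = 0 → ⟪(v : H), lam • p.2⟫ - ⟪Tt v, p.2⟫ = -⟪Γt1 v, p.1⟫} :=
    Set.ext fun _ => hgreen.eq_gamma_iff hA0 hAt0 hker hγ
  refine LinearMap.continuous_of_isClosed_graph _ ?_
  simp only [graph_eq, Set.ofPred_forall]
  exact isClosed_iInter fun v => isClosed_iInter fun _ => isClosed_eq (by fun_prop) (by fun_prop)

end Green

theorem stmt16_general {T Tt : H →ₗ.[ℂ] H} {Γ0 Γ1 : T.domain →ₗ[ℂ] G}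
    {Γt0 Γt1 : Tt.domain →ₗ[ℂ] G} (hgreen : GreenIdentity T Tt Γ0 Γ1 Γt0 Γt1)
    (hΓt0 : Function.Surjective Γt0)
    (hA0 : (T.restrictTo (LinearMap.ker Γ0)).adjoint = Tt.restrictTo (LinearMap.ker Γt0))
    (hAt0 : (Tt.restrictTo (LinearMap.ker Γt0)).adjoint = T.restrictTo (LinearMap.ker Γ0))
    {B : G →ₗ.[ℂ] G} (hB : B.IsClosable) (hran : ∀ f, Γ0 f = 0 → Γ1 f ∈ B.domain) {lam0 : ℂ}
    (hlam0 : InResolventSet (T.restrictTo (LinearMap.ker Γ0)) lam0) {gam0 : G → T.domain}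
    (hgam0 : IsGammaField T Γ0 lam0 gam0)
    (hsurj : ∀ k, ∃ h, ∃ hm : Γ1 (gam0 h) ∈ B.domain, h - B ⟨Γ1 (gam0 h), hm⟩ = k)
    (hbddinv : ∃ C : ℝ, ∀ h (hm : Γ1 (gam0 h) ∈ B.domain),
      ‖h‖ ≤ C * ‖h - B ⟨Γ1 (gam0 h), hm⟩‖) :
    (T.restrictTo (B.graph.comap (Γ1.prod Γ0))).IsClosed ∧
    InResolventSet (T.restrictTo (B.graph.comap (Γ1.prod Γ0))) lam0 ∧
    ∀ (lam : ℂ) (RB : H →L[ℂ] H),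
      InResolventSet (T.restrictTo (LinearMap.ker Γ0)) lam →
      ResolventAt (T.restrictTo (B.graph.comap (Γ1.prod Γ0))) lam RB →
      ∀ gam : G → T.domain, IsGammaField T Γ0 lam gam →
        ∀ (f : H) (u : T.domain), Γ0 u = 0 → T u - lam • (u : H) = f →
          ∃ hu : Γ1 u ∈ B.domain,
            (∃! h : G, ∃ hm : Γ1 (gam h) ∈ B.domain,
              h - B ⟨Γ1 (gam h), hm⟩ = B ⟨Γ1 u, hu⟩) ∧
            ∀ (h : G) (hm : Γ1 (gam h) ∈ B.domain),
              h - B ⟨Γ1 (gam h), hm⟩ = B ⟨Γ1 u, hu⟩ → RB f = (u : H) + gam h := by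
  obtain ⟨R, hR⟩ := hlam0
  have hker : ∀ x, Γ0 x = 0 → T x = lam0 • (x : H) → x = 0 := fun _ => hR.eq_zero_of_mem
  obtain ⟨γ, rfl⟩ := hgam0.exists_linearMap hker
  obtain ⟨C, hC⟩ := hbddinv
  obtain ⟨N, hN⟩ := exists_inverse_one_sub_comp (Γ1 ∘ₗ γ) hsurj hC
  obtain ⟨P, hP⟩ := hgreen.exists_continuousLinearMap_mem_graph hΓt0 hB hran hR
  let γH : G →L[ℂ] H := ⟨T.domain.subtype ∘ₗ γ, hgreen.continuous_gamma hA0 hAt0 hker hgam0⟩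
  have hRB₀ := resolventAt_comap_graph_of_eq_add (RB := R + γH ∘L N ∘L P) hR hgam0 hP hN
    fun _ => rfl
  refine ⟨hRB₀.isClosed, ⟨_, hRB₀⟩, ?_⟩
  rintro lam RB ⟨R', hR'⟩ hRB gam hgam _ u hu rfl
  have krein : ∀ h, (∃ hm : Γ1 (gam h) ∈ B.domain,
      h - B ⟨Γ1 (gam h), hm⟩ = B ⟨Γ1 u, hran u hu⟩) ↔
        RB (T u - lam • (u : H)) = u + gam h := fun h =>
    exists_sub_apply_eq_iff_mem_graph.trans
      (hgam.mem_graph_iff_resolvent_apply_eq hRB hu (B.mem_graph ⟨Γ1 u, hran u hu⟩))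
  refine ⟨hran u hu, ?_, fun h hm heq => (krein h).1 ⟨hm, heq⟩⟩
  simpa only [krein] using
    hgam.existsUnique_resolvent_apply_eq (fun _ => hR'.eq_zero_of_mem) hRB hu

theorem stmt16
    (S St T Tt : H →ₗ.[ℂ] H)
    (Γ0 Γ1 : T.domain →ₗ[ℂ] G) (Γt0 Γt1 : Tt.domain →ₗ[ℂ] G)
    (hgbt : IsGeneralizedBoundaryTriple S St T Tt Γ0 Γ1 Γt0 Γt1)
    (B : G →ₗ.[ℂ] G) (hBclosable : B.IsClosable)
    (hran : ∀ f : T.domain, Γ0 f = 0 → Γ1 f ∈ B.domain)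
    (lam0 : ℂ)
    (hlam0 : InResolventSet (T.restrictTo (LinearMap.ker Γ0)) lam0)
    (gam0 : G → T.domain)
    (hgam0 : ∀ h : G, T (gam0 h) = lam0 • ((gam0 h : H)) ∧ Γ0 (gam0 h) = h)
    (hinj : ∀ (h h' : G) (hm : Γ1 (gam0 h) ∈ B.domain) (hm' : Γ1 (gam0 h') ∈ B.domain),
      h - B ⟨Γ1 (gam0 h), hm⟩ = h' - B ⟨Γ1 (gam0 h'), hm'⟩ → h = h')
    (hsurj : ∀ k : G, ∃ h : G, ∃ hm : Γ1 (gam0 h) ∈ B.domain,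
      h - B ⟨Γ1 (gam0 h), hm⟩ = k)
    (hbddinv : ∃ C : ℝ, ∀ (h : G) (hm : Γ1 (gam0 h) ∈ B.domain),
      ‖h‖ ≤ C * ‖h - B ⟨Γ1 (gam0 h), hm⟩‖) :
    (T.restrictTo (Submodule.comap (Γ1.prod Γ0) B.graph)).IsClosed ∧
    InResolventSet (T.restrictTo (Submodule.comap (Γ1.prod Γ0) B.graph)) lam0 ∧
    (∀ (lam : ℂ) (RB : H →L[ℂ] H),
      InResolventSet (T.restrictTo (LinearMap.ker Γ0)) lam →
      ResolventAt (T.restrictTo (Submodule.comap (Γ1.prod Γ0) B.graph)) lam RB →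
      ∀ gam : G → T.domain,
        (∀ k : G, T (gam k) = lam • ((gam k : H)) ∧ Γ0 (gam k) = k) →
        ∀ (f : H) (u : T.domain), Γ0 u = 0 → T u - lam • (u : H) = f →
          ∃ hu : Γ1 u ∈ B.domain,
            (∃! h : G, ∃ hm : Γ1 (gam h) ∈ B.domain,
              h - B ⟨Γ1 (gam h), hm⟩ = B ⟨Γ1 u, hu⟩) ∧
            ∀ (h : G) (hm : Γ1 (gam h) ∈ B.domain),
              h - B ⟨Γ1 (gam h), hm⟩ = B ⟨Γ1 u, hu⟩ →
              RB f = (u : H) + ((gam h : H))) :=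
  stmt16_general hgbt.green hgbt.surj_Γt0 hgbt.A0_adjoint hgbt.At0_adjoint hBclosable hran hlam0
    hgam0 hsurj hbddinv

end
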